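/- arXiv:1709.00524 — 3 statements merged into one kernel-verified Lean document; each statement's English description precedes it below -/
import Mathlib

section
/- Let x be a real number and let α, ω₁, ω₂ be pairwise distinct complex numbers satisfying α+ω₁+ω₂ = x², αω₁+αω₂+ω₁ω₂ = -x, and αω₁ω₂ = 1. Set α̲ = 1 + α·i + α²·j + α³·k, ω̲₁ = 1 + ω₁·i + ω₁²·j + ω₁³·k, ω̲₂ = 1 + ω₂·i + ω₂²·j + ω₂³·k in the quaternion algebra over ℂ. Then for every natural number n, the Tribonacci quaternion polynomial (regarded in the quaternion algebra over ℂ) satisfies Q_{T,n}(x) = (α^{n+1}/((α-ω₁)(α-ω₂)))·α̲ - (ω₁^{n+1}/((α-ω₁)(ω₁-ω₂)))·ω̲₁ + (ω₂^{n+1}/((α-ω₂)(ω₁-ω₂)))·ω̲₂. -/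
/-- Tribonacci polynomials: T₀=0, T₁=1, T₂=x², Tₙ₊₃ = x²Tₙ₊₂ + xTₙ₊₁ + Tₙ. -/
def Trib (x : ℝ) : ℕ → ℝ
  | 0 => 0
  | 1 => 1
  | 2 => x ^ 2
  | n + 3 => x ^ 2 * Trib x (n + 2) + x * Trib x (n + 1) + Trib x n

/-- Tribonacci quaternion polynomials Q_{T,n}(x). -/
noncomputable def QT (x : ℝ) (n : ℕ) : Quaternion ℝ :=
  ⟨Trib x n, Trib x (n + 1), Trib x (n + 2), Trib x (n + 3)⟩

/-- Tribonacci quaternion polynomials regarded in the quaternion algebra over ℂ. -/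
noncomputable def QTC (x : ℝ) (n : ℕ) : Quaternion ℂ :=
  ⟨(Trib x n : ℂ), (Trib x (n + 1) : ℂ), (Trib x (n + 2) : ℂ), (Trib x (n + 3) : ℂ)⟩

/-- The quaternion 1 + a·i + a²·j + a³·k over ℂ. -/
def uq (a : ℂ) : Quaternion ℂ := ⟨1, a, a ^ 2, a ^ 3⟩

lemma trib_binet_aux (x : ℝ) (α ω₁ ω₂ : ℂ)
    (hαω₁ : α ≠ ω₁) (hαω₂ : α ≠ ω₂) (hω₁ω₂ : ω₁ ≠ ω₂)
    (hsum : α + ω₁ + ω₂ = (x : ℂ) ^ 2)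
    (hsum2 : α * ω₁ + α * ω₂ + ω₁ * ω₂ = -(x : ℂ))
    (hprod : α * ω₁ * ω₂ = 1) (n : ℕ) :
    (Trib x n : ℂ)
      = α ^ (n + 1) / ((α - ω₁) * (α - ω₂))
        - ω₁ ^ (n + 1) / ((α - ω₁) * (ω₁ - ω₂))
        + ω₂ ^ (n + 1) / ((α - ω₂) * (ω₁ - ω₂)) := by
  have h1 := sub_ne_zero.mpr hαω₁
  have h2 := sub_ne_zero.mpr hαω₂
  have h3 := sub_ne_zero.mpr hω₁ω₂
  have key : ∀ a : ℂ, (a - α) * (a - ω₁) * (a - ω₂) = 0 →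
      a ^ 3 = (x : ℂ) ^ 2 * a ^ 2 + x * a + 1 := by
    intro a ha
    linear_combination ha + a ^ 2 * hsum - a * hsum2 + hprod
  have ka := key α (by ring)
  have k1 := key ω₁ (by ring)
  have k2 := key ω₂ (by ring)
  induction n using Nat.strong_induction_on with
  | _ n ih =>
    match n, ih with
    | 0, _ =>
      simp only [Trib]
      field_simp
      push_cast
      ring
    | 1, _ =>
      simp only [Trib]
      field_simp
      push_cast
      ring
    | 2, _ =>
      simp only [Trib]
      push_cast
      rw [← hsum]
      field_simp
      ring
    | m + 3, ih =>
      have i0 := ih m (by omega)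
      have i1 := ih (m + 1) (by omega)
      have i2 := ih (m + 2) (by omega)
      simp only [Trib]
      push_cast
      rw [i0, i1, i2]
      linear_combination (-α ^ (m + 1) / ((α - ω₁) * (α - ω₂))) * ka
        + (ω₁ ^ (m + 1) / ((α - ω₁) * (ω₁ - ω₂))) * k1
        - (ω₂ ^ (m + 1) / ((α - ω₂) * (ω₁ - ω₂))) * k2

/-- Binet formula for the Tribonacci quaternion polynomials. -/
theorem tribonacci_quaternion_binet (x : ℝ) (α ω₁ ω₂ : ℂ)
    (hαω₁ : α ≠ ω₁) (hαω₂ : α ≠ ω₂) (hω₁ω₂ : ω₁ ≠ ω₂)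
    (hsum : α + ω₁ + ω₂ = (x : ℂ) ^ 2)
    (hsum2 : α * ω₁ + α * ω₂ + ω₁ * ω₂ = -(x : ℂ))
    (hprod : α * ω₁ * ω₂ = 1) (n : ℕ) :
    QTC x n
      = (α ^ (n + 1) / ((α - ω₁) * (α - ω₂))) • uq α
        - (ω₁ ^ (n + 1) / ((α - ω₁) * (ω₁ - ω₂))) • uq ω₁
        + (ω₂ ^ (n + 1) / ((α - ω₂) * (ω₁ - ω₂))) • uq ω₂ := by
  have key := trib_binet_aux x α ω₁ ω₂ hαω₁ hαω₂ hω₁ω₂ hsum hsum2 hprod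
  have hs : ∀ (c a : ℂ), c • uq a = (⟨c * 1, c * a, c * a ^ 2, c * a ^ 3⟩ : Quaternion ℂ) :=
    fun c a => rfl
  rw [hs, hs, hs]
  apply Quaternion.ext
  · change (Trib x n : ℂ) = _ - _ + _
    rw [key]; ring
  · change (Trib x (n + 1) : ℂ) = _ - _ + _
    rw [key]; ring
  · change (Trib x (n + 2) : ℂ) = _ - _ + _
    rw [key]; ring
  · change (Trib x (n + 3) : ℂ) = _ - _ + _
    rw [key]; ring
end

section
/- Let x be a real number and let α, ω₁, ω₂ be complex numbers satisfying α+ω₁+ω₂ = x², αω₁+αω₂+ω₁ω₂ = -x, and αω₁ω₂ = 1, and set α̲ = 1 + α·i + α²·j + α³·k, ω̲₁ = 1 + ω₁·i + ω₁²·j + ω₁³·k, ω̲₂ = 1 + ω₂·i + ω₂²·j + ω₂³·k in the quaternion algebra over ℂ. Then for every complex number y, the series ∑_{n≥0} (yⁿ/n!)·Q_{t,n}(x) converges (has sum) to e^{αy}·α̲ + e^{ω₁y}·ω̲₁ + e^{ω₂y}·ω̲₂. -/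
/-- Tribonacci-Lucas polynomials: t₀=3, t₁=x², t₂=x⁴+2x, tₙ₊₃ = x²tₙ₊₂ + xtₙ₊₁ + tₙ. -/
def TribL (x : ℝ) : ℕ → ℝ
  | 0 => 3
  | 1 => x ^ 2
  | 2 => x ^ 4 + 2 * x
  | n + 3 => x ^ 2 * TribL x (n + 2) + x * TribL x (n + 1) + TribL x n

/-- Tribonacci-Lucas quaternion polynomials Q_{t,n}(x). -/
noncomputable def Qt (x : ℝ) (n : ℕ) : Quaternion ℝ :=
  ⟨TribL x n, TribL x (n + 1), TribL x (n + 2), TribL x (n + 3)⟩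

/-- Tribonacci-Lucas quaternion polynomials regarded in the quaternion algebra over ℂ. -/
noncomputable def QtC (x : ℝ) (n : ℕ) : Quaternion ℂ :=
  ⟨(TribL x n : ℂ), (TribL x (n + 1) : ℂ), (TribL x (n + 2) : ℂ), (TribL x (n + 3) : ℂ)⟩

/-- The natural (componentwise) topology on the quaternion algebra over ℂ. -/
noncomputable instance : TopologicalSpace (Quaternion ℂ) :=
  TopologicalSpace.induced (fun q => (q.re, q.imI, q.imJ, q.imK)) inferInstance

lemma TribL_binet (x : ℝ) (α ω₁ ω₂ : ℂ)
    (hsum : α + ω₁ + ω₂ = (x : ℂ) ^ 2)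
    (hsum2 : α * ω₁ + α * ω₂ + ω₁ * ω₂ = -(x : ℂ))
    (hprod : α * ω₁ * ω₂ = 1) (n : ℕ) :
    (TribL x n : ℂ) = α ^ n + ω₁ ^ n + ω₂ ^ n := by
  induction n using Nat.strong_induction_on with
  | _ n ih =>
    match n, ih with
    | 0, _ => norm_num [TribL]
    | 1, _ => simp [TribL, hsum]
    | 2, _ =>
      simp only [TribL]
      push_cast
      linear_combination (-(x:ℂ)^2 - (α + ω₁ + ω₂)) * hsum + 2 * hsum2
    | n + 3, ih =>
      simp only [TribL]
      push_cast
      rw [ih n (by omega), ih (n+1) (by omega), ih (n+2) (by omega), ← hsum,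
        ← neg_eq_iff_eq_neg.mpr hsum2]
      linear_combination -(α ^ n + ω₁ ^ n + ω₂ ^ n) * hprod

lemma hasSum_exp_shift (a y : ℂ) (m : ℕ) :
    HasSum (fun n : ℕ => (y ^ n / n.factorial) * a ^ (n + m)) (Complex.exp (a * y) * a ^ m) := by
  have h := (NormedSpace.expSeries_div_hasSum_exp (a * y)).mul_right (a ^ m)
  rw [← Complex.exp_eq_exp_ℂ] at h
  refine h.congr_fun ?_
  intro n
  rw [mul_pow, pow_add]
  ring

/-- exponential generating function of the Tribonacci-Lucas quaternion
polynomials. -/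
theorem tribonacci_lucas_quaternion_exp_generating_function (x : ℝ) (α ω₁ ω₂ : ℂ)
    (hsum : α + ω₁ + ω₂ = (x : ℂ) ^ 2)
    (hsum2 : α * ω₁ + α * ω₂ + ω₁ * ω₂ = -(x : ℂ))
    (hprod : α * ω₁ * ω₂ = 1) (y : ℂ) :
    HasSum (fun n : ℕ => (y ^ n / n.factorial) • QtC x n)
      (Complex.exp (α * y) • uq α + Complex.exp (ω₁ * y) • uq ω₁
        + Complex.exp (ω₂ * y) • uq ω₂) := by
  have key : ∀ m : ℕ, HasSum (fun n : ℕ => (y ^ n / n.factorial) * (TribL x (n + m) : ℂ))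
      (Complex.exp (α * y) * α ^ m + Complex.exp (ω₁ * y) * ω₁ ^ m
        + Complex.exp (ω₂ * y) * ω₂ ^ m) := by
    intro m
    have h := ((hasSum_exp_shift α y m).add (hasSum_exp_shift ω₁ y m)).add
      (hasSum_exp_shift ω₂ y m)
    convert h using 2 with n
    rw [TribL_binet x α ω₁ ω₂ hsum hsum2 hprod]
    ring
  let g : Quaternion ℂ →+ ℂ × ℂ × ℂ × ℂ :=
    { toFun := fun q => (q.re, q.imI, q.imJ, q.imK)
      map_zero' := rfl
      map_add' := fun _ _ => rfl }
  have hg : Topology.IsInducing g := ⟨rfl⟩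
  rw [← hg.hasSum_iff]
  have h := (key 0).prodMk ((key 1).prodMk ((key 2).prodMk (key 3)))
  convert h using 1
  · rfl
  · simp only [pow_zero, pow_one]
    have e : ∀ c a : ℂ, g (c • uq a) = (c * 1, c * a, c * a ^ 2, c * a ^ 3) := fun _ _ => rfl
    rw [map_add, map_add, e, e, e]
    rfl
end

section
/- For every real number x, let S(x) be the 3×3 matrix over the real quaternions ℍ with rows (x², x, 1), (1, 0, 0), (0, 1, 0) (real entries regarded as scalar quaternions), and let Q_S(x) be the 3×3 matrix over ℍ with rows (Q_{T,4}(x), x·Q_{T,3}(x)+Q_{T,2}(x), Q_{T,3}(x)), (Q_{T,3}(x), x·Q_{T,2}(x)+Q_{T,1}(x), Q_{T,2}(x)), (Q_{T,2}(x), x·Q_{T,1}(x)+Q_{T,0}(x), Q_{T,1}(x)). Then for every natural number n, the matrix product Q_S(x)·S(x)ⁿ equals the 3×3 matrix with rows (Q_{T,n+4}(x), x·Q_{T,n+3}(x)+Q_{T,n+2}(x), Q_{T,n+3}(x)), (Q_{T,n+3}(x), x·Q_{T,n+2}(x)+Q_{T,n+1}(x), Q_{T,n+2}(x)), (Q_{T,n+2}(x),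 x·Q_{T,n+1}(x)+Q_{T,n}(x), Q_{T,n+1}(x)). -/
/-- The S(x)-matrix, with real entries regarded as scalar quaternions. -/
noncomputable def Smat (x : ℝ) : Matrix (Fin 3) (Fin 3) (Quaternion ℝ) :=
  !![((x ^ 2 : ℝ) : Quaternion ℝ), ((x : ℝ) : Quaternion ℝ), 1; 1, 0, 0; 0, 1, 0]

/-- The Tribonacci quaternion polynomial matrix Q_S(x). -/
noncomputable def QSmat (x : ℝ) : Matrix (Fin 3) (Fin 3) (Quaternion ℝ) :=
  !![QT x 4, x • QT x 3 + QT x 2, QT x 3;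
     QT x 3, x • QT x 2 + QT x 1, QT x 2;
     QT x 2, x • QT x 1 + QT x 0, QT x 1]

theorem QT_rec (x : ℝ) (n : ℕ) :
    QT x (n + 3) = x ^ 2 • QT x (n + 2) + (x • QT x (n + 1) + QT x n) := by
  have hr (m : ℕ) : (QT x m).re = Trib x m := rfl
  have hi (m : ℕ) : (QT x m).imI = Trib x (m + 1) := rfl
  have hj (m : ℕ) : (QT x m).imJ = Trib x (m + 2) := rfl
  have hk (m : ℕ) : (QT x m).imK = Trib x (m + 3) := rfl
  have ht (m : ℕ) : Trib x (m + 3) = x ^ 2 * Trib x (m + 2) + x * Trib x (m + 1) + Trib x m := by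
    rw [Trib]
  ext
  · simp [hr]; linarith [ht n]
  · simp [hi]; linarith [ht (n + 1)]
  · simp [hj]; linarith [ht (n + 2)]
  · simp [hk]; linarith [ht (n + 3)]

/-- `Q_S(x)·S(x)ⁿ` is given by shifted Tribonacci quaternion polynomials. -/
theorem tribonacci_quaternion_matrix_identity (x : ℝ) (n : ℕ) :
    QSmat x * Smat x ^ n
      = !![QT x (n + 4), x • QT x (n + 3) + QT x (n + 2), QT x (n + 3);
           QT x (n + 3), x • QT x (n + 2) + QT x (n + 1), QT x (n + 2);
           QT x (n + 2), x • QT x (n + 1) + QT x n, QT x (n + 1)] := by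
  induction n with
  | zero => simp [QSmat]
  | succ n ih =>
    have h0 := QT_rec x n
    have h1 : QT x (n + 4) = x ^ 2 • QT x (n + 3) + (x • QT x (n + 2) + QT x (n + 1)) :=
      QT_rec x (n + 1)
    have h2 : QT x (n + 5) = x ^ 2 • QT x (n + 4) + (x • QT x (n + 3) + QT x (n + 2)) :=
      QT_rec x (n + 2)
    rw [pow_succ, ← mul_assoc, ih, Smat]
    change _ = !![QT x (n + 5), x • QT x (n + 4) + QT x (n + 3), QT x (n + 4);
           QT x (n + 4), x • QT x (n + 3) + QT x (n + 2), QT x (n + 3);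
           QT x (n + 3), x • QT x (n + 2) + QT x (n + 1), QT x (n + 2)]
    have hc (q : Quaternion ℝ) (r : ℝ) : q * (r : Quaternion ℝ) = r • q :=
      Quaternion.mul_coe_eq_smul r q
    ext1 i j
    fin_cases i <;> fin_cases j <;>
      simp [-Quaternion.coe_pow, Matrix.mul_apply, Fin.sum_univ_three, hc, h0, h1, h2]
end
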